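/- For 0 ≤ i ≤ d, u_i = Σ_{h=0}^i (τ*_h(θ*_{r+i})/(φ_1φ_2···φ_h))·τ_h as polynomials in ℂ[λ]; dually, u*_i = Σ_{h=0}^i (τ_h(θ_{t+i})/(φ_1φ_2···φ_h))·τ*_h (the empty product φ_1···φ_0 being 1). -/

import Mathlib

open Matrix
open scoped Classical

noncomputable section

/-- The full setup: a `Q`-polynomial distance-regular graph `Γ = (X,R)` of diameter `D ≥ 3`,
with adjacency matrix `A`, primitive idempotents `E_i`, eigenvalues `θ_i`,
Krein parameters `q^h_{ij}`, a fixed base vertex `x`, dual primitive idempotents `E*_i`,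
dual adjacency matrix `A*` and dual eigenvalues `θ*_i`. -/
structure TSetup (X : Type*) [Fintype X] [DecidableEq X] where
  G : SimpleGraph X
  hGconn : G.Connected
  D : ℕ
  hD3 : 3 ≤ D
  hDiamLe : ∀ y z : X, G.dist y z ≤ D
  hDiamEq : ∃ y z : X, G.dist y z = D
  p : ℕ → ℕ → ℕ → ℕ
  hDRG : ∀ h i j : ℕ, h ≤ D → i ≤ D → j ≤ D → ∀ y z : X, G.dist y z = h →
    Nat.card {w : X // G.dist y w = i ∧ G.dist z w = j} = p h i j
  A : Matrix X X ℂ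
  hA : ∀ y z : X, A y z = if G.Adj y z then 1 else 0
  E : ℕ → Matrix X X ℂ
  hEzero : ∀ i : ℕ, D < i → E i = 0
  hEsum : ∑ i ∈ Finset.range (D + 1), E i = 1
  hEidem : ∀ i j : ℕ, i ≤ D → j ≤ D → E i * E j = if i = j then E i else 0
  hEsymm : ∀ i : ℕ, (E i)ᵀ = E i
  hEreal : ∀ i : ℕ, (E i).map (starRingEnd ℂ) = E i
  hE0 : E 0 = (Fintype.card X : ℂ)⁻¹ • Matrix.of (fun _ _ => (1 : ℂ))
  θ : ℕ → ℝ
  hθinj : ∀ i j : ℕ, i ≤ D → j ≤ D → θ i = θ j → i = j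
  hAspec : A = ∑ i ∈ Finset.range (D + 1), (θ i : ℂ) • E i
  q : ℕ → ℕ → ℕ → ℝ
  hKrein : ∀ i j : ℕ, i ≤ D → j ≤ D →
    Matrix.hadamard (E i) (E j) =
      (Fintype.card X : ℂ)⁻¹ • ∑ h ∈ Finset.range (D + 1), (q h i j : ℂ) • E h
  hQpoly0 : ∀ h i j : ℕ, h ≤ D → i ≤ D → j ≤ D →
    (i + j < h ∨ h + j < i ∨ h + i < j) → q h i j = 0
  hQpoly1 : ∀ h i j : ℕ, h ≤ D → i ≤ D → j ≤ D →
    (h = i + j ∨ i = h + j ∨ j = h + i) → q h i j ≠ 0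
  x : X
  Estar : ℕ → Matrix X X ℂ
  hEstarzero : ∀ i : ℕ, D < i → Estar i = 0
  hEstar : ∀ i : ℕ, i ≤ D → ∀ y z : X,
    Estar i y z = if y = z ∧ G.dist x y = i then 1 else 0
  Astar : Matrix X X ℂ
  hAstar : ∀ y z : X, Astar y z = if y = z then (Fintype.card X : ℂ) * E 1 x y else 0
  θstar : ℕ → ℝ
  hθstarinj : ∀ i j : ℕ, i ≤ D → j ≤ D → θstar i = θstar j → i = j
  hAstarspec : Astar = ∑ i ∈ Finset.range (D + 1), (θstar i : ℂ) • Estar i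

variable {X : Type*} [Fintype X] [DecidableEq X]

/-- The Terwilliger algebra `T = T(x)`, generated by `A` and `A*`. -/
def TSetup.T (S : TSetup X) : Subalgebra ℂ (Matrix X X ℂ) :=
  Algebra.adjoin ℂ {S.A, S.Astar}

/-- A thin irreducible `T`-module `W` with endpoint `r`, dual endpoint `t` and diameter `d`,
where `E*_i W ≠ 0` iff `r ≤ i ≤ r + d` and `E_i W ≠ 0` iff `t ≤ i ≤ t + d`. -/
structure TMod (S : TSetup X) where
  W : Submodule ℂ (X → ℂ)
  hWinv : ∀ B ∈ S.T, ∀ w ∈ W, B *ᵥ w ∈ W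
  hWne : W ≠ ⊥
  hWirr : ∀ U : Submodule ℂ (X → ℂ), U ≤ W →
    (∀ B ∈ S.T, ∀ w ∈ U, B *ᵥ w ∈ U) → U = ⊥ ∨ U = W
  hthin : ∀ i : ℕ, Module.finrank ℂ (W.map (S.Estar i).mulVecLin) ≤ 1
  r : ℕ
  t : ℕ
  d : ℕ
  hr : ∀ i : ℕ, W.map (S.Estar i).mulVecLin ≠ ⊥ ↔ r ≤ i ∧ i ≤ r + d
  ht : ∀ i : ℕ, W.map (S.E i).mulVecLin ≠ ⊥ ↔ t ≤ i ∧ i ≤ t + d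

open Classical in
/-- The action of a matrix `B` on `W` (the restriction of `B` to `W`; defined to be `0`
if `B` does not leave `W` invariant). -/
def actW (S : TSetup X) (M : TMod S) (B : Matrix X X ℂ) : M.W →ₗ[ℂ] M.W :=
  if h : ∀ w ∈ M.W, B.mulVecLin w ∈ M.W then B.mulVecLin.restrict h else 0

/-- `tr_W(B)`: the trace of the action of `B` on `W`. -/
def trW (S : TSetup X) (M : TMod S) (B : Matrix X X ℂ) : ℂ :=
  LinearMap.trace ℂ M.W (actW S M B)

/-- `a_i(W) = tr_W(E*_{r+i} A)`. -/
def aW (S : TSetup X) (M : TMod S) (i : ℕ) : ℂ :=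
  trW S M (S.Estar (M.r + i) * S.A)

/-- `x_i(W) = tr_W(E*_{r+i} A E*_{r+i-1} A)`, with `x_0(W) = 0`. -/
def xW (S : TSetup X) (M : TMod S) (i : ℕ) : ℂ :=
  if i = 0 then 0 else trW S M (S.Estar (M.r + i) * S.A * S.Estar (M.r + i - 1) * S.A)

/-- `a*_i(W) = tr_W(E_{t+i} A*)`. -/
def astarW (S : TSetup X) (M : TMod S) (i : ℕ) : ℂ :=
  trW S M (S.E (M.t + i) * S.Astar)

/-- `x*_i(W) = tr_W(E_{t+i} A* E_{t+i-1} A*)`, with `x*_0(W) = 0`. -/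
def xstarW (S : TSetup X) (M : TMod S) (i : ℕ) : ℂ :=
  if i = 0 then 0 else trW S M (S.E (M.t + i) * S.Astar * S.E (M.t + i - 1) * S.Astar)

/-- The polynomials `p_i`: `p_0 = 1`, `p_{-1} = 0`,
`λ p_i = p_{i+1} + a_i(W) p_i + x_i(W) p_{i-1}`. -/
def pW (S : TSetup X) (M : TMod S) : ℕ → Polynomial ℂ
  | 0 => 1
  | 1 => Polynomial.X - Polynomial.C (aW S M 0)
  | (n + 2) =>
      (Polynomial.X - Polynomial.C (aW S M (n + 1))) * pW S M (n + 1)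
        - Polynomial.C (xW S M (n + 1)) * pW S M n

/-- The polynomials `p*_i`: `p*_0 = 1`, `p*_{-1} = 0`,
`λ p*_i = p*_{i+1} + a*_i(W) p*_i + x*_i(W) p*_{i-1}`. -/
def pstarW (S : TSetup X) (M : TMod S) : ℕ → Polynomial ℂ
  | 0 => 1
  | 1 => Polynomial.X - Polynomial.C (astarW S M 0)
  | (n + 2) =>
      (Polynomial.X - Polynomial.C (astarW S M (n + 1))) * pstarW S M (n + 1)
        - Polynomial.C (xstarW S M (n + 1)) * pstarW S M n

/-- The Hermitian inner product `⟨u,v⟩ = Σ_y u_y conj(v_y)` on `ℂ^X`. -/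
def herm (u v : X → ℂ) : ℂ := ∑ y, u y * (starRingEnd ℂ) (v y)

/-- `ν(W)`, the multiplicative inverse of `m_0(W) = tr_W(E_t E*_r)`. -/
def nuW (S : TSetup X) (M : TMod S) : ℂ :=
  (trW S M (S.E M.t * S.Estar M.r))⁻¹

/-- `k_i(W) = ν(W) m*_i(W)` where `m*_i(W) = tr_W(E*_{r+i} E_t)`. -/
def kW (S : TSetup X) (M : TMod S) (i : ℕ) : ℂ :=
  nuW S M * trW S M (S.Estar (M.r + i) * S.E M.t)

/-- `k*_i(W) = ν(W) m_i(W)` where `m_i(W) = tr_W(E_{t+i} E*_r)`. -/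
def kstarW (S : TSetup X) (M : TMod S) (i : ℕ) : ℂ :=
  nuW S M * trW S M (S.E (M.t + i) * S.Estar M.r)

/-!
The module `W` carries a Leonard system, that is, `A` and `A*` act on `W` with simple spectra and
each is tridiagonal on the eigenspaces of the other. For `A*` this uses the vanishing of the Krein
parameters: `‖E_i A* E_j‖² = tr(A* E_j A* E_i)` depends only on row `x` of `E_1` and of
`E_1 (E_j ∘ E_i)`, and the latter matrix is a multiple of `q^1_{ij} E_1`.

Let `0 ≠ v ∈ E*_r W`. The vectors `τ_h(A) v` form a basis in which `A` is lower bidiagonal and `A*`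
is upper bidiagonal, with superdiagonal entries `φ_h`. Solving the recursion for the
`θ*_{r+i}`-eigenvector of `A*` in this basis shows that `∑_h τ*_h(θ*_{r+i}) / (φ_1 ⋯ φ_h) τ_h(A) v`
spans `E*_{r+i} W`, and so does `p_i(A) v`. Hence the two polynomials are proportional, and the sum
has value `1` at `θ_t`. The dual formula needs no second split basis: by Askey–Wilson duality
`u_i(θ_{t+j}) = u*_j(θ*_{r+i})`, and the right-hand sides of the two formulas are related in the
same way.
-/

open Polynomial

section RankOne

variable {K V : Type*} [Field K] [AddCommGroup V] [Module K V]

theorem exists_eq_smul_of_finrank_le_one [FiniteDimensional K V] (h : Module.finrank K V ≤ 1)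
    {v : V} (hv : v ≠ 0) (w : V) : ∃ c : K, w = c • v := by
  have : Nontrivial V := nontrivial_of_ne v 0 hv
  obtain ⟨c, hc⟩ := exists_smul_eq_of_finrank_eq_one (h.antisymm Module.finrank_pos) hv w
  exact ⟨c, hc.symm⟩

theorem mul_mul_eq_trace_smul_of_finrank_range_le_one [FiniteDimensional K V]
    {P : Module.End K V} (hP : Module.finrank K (LinearMap.range P) ≤ 1) (Y : Module.End K V) :
    P * Y * P = LinearMap.trace K V (P * Y) • P := by
  have hmem (z : V) : (P * Y) z ∈ LinearMap.range P := LinearMap.mem_range_self P (Y z)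
  rcases Nat.le_one_iff_eq_zero_or_eq_one.mp hP with h | h
  · rw [Submodule.finrank_eq_zero, LinearMap.range_eq_bot] at h
    simp only [h, mul_zero, smul_zero]
  · obtain ⟨c, hc, -⟩ := LinearMap.existsUnique_eq_smul_id_of_finrank_eq_one h
      ((P * Y).restrict fun z _ => hmem z)
    have htrace : LinearMap.trace K V (P * Y) = c := by
      rw [← LinearMap.trace_restrict_eq_of_forall_mem _ _ hmem, hc, map_smul, LinearMap.trace_id, h]
      simp
    ext z
    simpa [htrace] using congrArg Subtype.val (LinearMap.congr_fun hc ⟨P z, z, rfl⟩)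

end RankOne

section SpectralDecomposition

variable {K R R' : Type*} [Field K] [Ring R] [Algebra K R] [Ring R'] [Algebra K R']

theorem idem_eq_zero_of_notMem {ι : Type*} {e : ι → R} {s : Finset ι}
    (he : OrthogonalIdempotents e) (hsum : ∑ i ∈ s, e i = 1) {i : ι} (hi : i ∉ s) : e i = 0 := by
  rw [← mul_one (e i), ← hsum, he.mul_sum_of_notMem hi]

/-- The spectral decomposition `A = θ_0 E_0 + ⋯ + θ_d E_d`, with mutually orthogonal idempotents
`E_i` summing to `1` and mutually distinct `θ_i`. The sequences are indexed by `ℕ`; the `E_i`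
with `i > d` are then forced to vanish, and the `θ_i` with `i > d` are irrelevant. -/
structure IsSpectralDecomp (d : ℕ) (A : R) (E : ℕ → R) (θ : ℕ → K) : Prop where
  idem : OrthogonalIdempotents E
  sum_eq_one : ∑ i ∈ Finset.range (d + 1), E i = 1
  eq_sum : A = ∑ i ∈ Finset.range (d + 1), θ i • E i
  injOn : Set.InjOn θ (Finset.range (d + 1))

namespace IsSpectralDecomp

variable {d : ℕ} {A : R} {E : ℕ → R} {θ : ℕ → K}

theorem eq_zero_of_lt (h : IsSpectralDecomp d A E θ) {i : ℕ} (hi : d < i) : E i = 0 :=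
  idem_eq_zero_of_notMem h.idem h.sum_eq_one (by simpa using hi)

theorem aeval_eq_sum (h : IsSpectralDecomp d A E θ) (g : K[X]) :
    aeval A g = ∑ i ∈ Finset.range (d + 1), g.eval (θ i) • E i := by
  induction g using Polynomial.induction_on' with
  | add p q hp hq => simp only [map_add, hp, hq, eval_add, add_smul, Finset.sum_add_distrib]
  | monomial n c =>
    induction n with
    | zero => simp [← Finset.smul_sum, h.sum_eq_one, Algebra.algebraMap_eq_smul_one]
    | succ n ih =>
      rw [← monomial_mul_X, map_mul, ih, aeval_X]
      conv_lhs => rw [h.eq_sum]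
      simp only [Finset.sum_mul, eval_mul, eval_X]
      refine Finset.sum_congr rfl fun i hi => ?_
      rw [Finset.mul_sum, Finset.sum_eq_single_of_mem i hi fun j _ hj => by
        rw [smul_mul_smul_comm, h.idem.ortho hj.symm, smul_zero],
        smul_mul_smul_comm, (h.idem.idem i).eq]

theorem aeval_mul_idem (h : IsSpectralDecomp d A E θ) (g : K[X]) (i : ℕ) :
    aeval A g * E i = g.eval (θ i) • E i := by
  rw [h.aeval_eq_sum, Finset.sum_mul]
  by_cases hi : i ∈ Finset.range (d + 1)
  · rw [Finset.sum_eq_single_of_mem i hi fun j _ hj => by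
      rw [smul_mul_assoc, h.idem.ortho hj, smul_zero], smul_mul_assoc, (h.idem.idem i).eq]
  · simp [h.eq_zero_of_lt (by simpa using hi : d < i)]

theorem commute_aeval (h : IsSpectralDecomp d A E θ) (g : K[X]) (i : ℕ) :
    Commute (aeval A g) (E i) := by
  rw [h.aeval_eq_sum]
  refine Commute.sum_left _ _ _ fun j _ => Commute.smul_left ?_ _
  rcases eq_or_ne j i with rfl | hji
  · rfl
  · rw [commute_iff_eq, h.idem.ortho hji, h.idem.ortho hji.symm]

theorem idem_mul_aeval (h : IsSpectralDecomp d A E θ) (g : K[X]) (i : ℕ) :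
    E i * aeval A g = g.eval (θ i) • E i := by
  rw [← (h.commute_aeval g i).eq, h.aeval_mul_idem]

theorem mul_idem (h : IsSpectralDecomp d A E θ) (i : ℕ) : A * E i = θ i • E i := by
  simpa using h.aeval_mul_idem Polynomial.X i

theorem idem_mul (h : IsSpectralDecomp d A E θ) (i : ℕ) : E i * A = θ i • E i := by
  simpa using h.idem_mul_aeval Polynomial.X i

theorem mem_adjoin (h : IsSpectralDecomp d A E θ) (i : ℕ) : E i ∈ Algebra.adjoin K {A} := by
  by_cases hi : i ∈ Finset.range (d + 1)
  · have hE : aeval A (Lagrange.basis (Finset.range (d + 1)) θ i) = E i := by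
      rw [h.aeval_eq_sum, Finset.sum_eq_single_of_mem i hi fun j hj hji => by
        rw [Lagrange.eval_basis_of_ne hji.symm hj, zero_smul],
        Lagrange.eval_basis_self h.injOn hi, one_smul]
    exact hE ▸ aeval_mem_adjoin_singleton K A
  · rw [h.eq_zero_of_lt (by simpa using hi)]
    exact zero_mem _

theorem of_map_injective {f : R →ₐ[K] R'} (hf : Function.Injective f)
    (h : IsSpectralDecomp d (f A) (f ∘ E) θ) : IsSpectralDecomp d A E θ where
  idem := (OrthogonalIdempotents.map_injective_iff f.toRingHom hf).mp h.idem
  sum_eq_one := hf (by simpa using h.sum_eq_one)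
  eq_sum := hf (by simpa using h.eq_sum)
  injOn := h.injOn

theorem map_shift (h : IsSpectralDecomp d A E θ) (f : R →ₐ[K] R') {t d' : ℕ}
    (ht : ∀ i, f (E i) ≠ 0 ↔ t ≤ i ∧ i ≤ t + d') :
    IsSpectralDecomp d' (f A) (fun i => f (E (t + i))) (fun i => θ (t + i)) := by
  have htd : t + d' ≤ d := by
    by_contra hlt
    exact (ht (t + d')).mpr ⟨by omega, le_rfl⟩ (by rw [h.eq_zero_of_lt (by omega), map_zero])
  have hsum (c : ℕ → K) : ∑ i ∈ Finset.range (d' + 1), c (t + i) • f (E (t + i)) =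
      f (∑ i ∈ Finset.range (d + 1), c i • E i) := by
    simp only [map_sum, map_smul]
    rw [← Finset.sum_image (s := Finset.range (d' + 1)) (g := (t + ·))
      (f := fun i => c i • f (E i)) (by simp)]
    refine Finset.sum_subset (fun i hi => ?_) fun i _ hi => ?_
    · simp only [Finset.mem_image, Finset.mem_range] at hi ⊢
      omega
    · rw [not_ne_iff.mp (mt (ht i).mp fun hti => hi ?_), smul_zero]
      exact Finset.mem_image.mpr ⟨i - t, Finset.mem_range.mpr (by omega), by omega⟩
  exact
    { idem := (h.idem.map f.toRingHom).embedding (addLeftEmbedding t)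
      sum_eq_one := by simpa [h.sum_eq_one] using hsum 1
      eq_sum := by rw [hsum, ← h.eq_sum]
      injOn := fun i hi j hj hij => by
        simp only [Finset.coe_range, Set.mem_Iio] at hi hj
        have := h.injOn (by simp; omega) (by simp; omega) hij
        omega }

theorem eq_of_eval_eq (h : IsSpectralDecomp d A E θ) {f g : K[X]} (hf : f.natDegree ≤ d)
    (hg : g.natDegree ≤ d) (hfg : ∀ j ≤ d, f.eval (θ j) = g.eval (θ j)) : f = g := by
  have hdegree {q : K[X]} (hq : q.natDegree ≤ d) : q.degree < (Finset.range (d + 1)).card := by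
    rw [Finset.card_range]
    exact degree_le_natDegree.trans_lt (by exact_mod_cast Nat.lt_succ_of_le hq)
  exact eq_of_degrees_lt_of_eval_index_eq _ h.injOn (hdegree hf) (hdegree hg) fun j hj =>
    hfg j (Finset.mem_range_succ_iff.mp hj)

theorem apply_eq_self {V : Type*} [AddCommGroup V] [Module K V] {A : Module.End K V}
    {E : ℕ → Module.End K V} (h : IsSpectralDecomp d A E θ) {i : ℕ} (hi : i ≤ d) {y : V}
    (hy : A y = θ i • y) : E i y = y := by
  have hzero (j : ℕ) (hj : j ∈ Finset.range (d + 1)) (hji : j ≠ i) : E j y = 0 := by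
    have hEj : θ i • E j y = θ j • E j y := by
      rw [← map_smul, ← hy, ← Module.End.mul_apply, h.idem_mul, LinearMap.smul_apply]
    by_contra hne
    have hij : θ i = θ j := smul_left_injective K hne hEj
    exact hji (h.injOn hj (by simpa using Nat.lt_succ_of_le hi) hij.symm)
  have hsum : ∑ j ∈ Finset.range (d + 1), E j y = y := by
    rw [← LinearMap.sum_apply, h.sum_eq_one, Module.End.one_apply]
  rw [← Finset.sum_eq_single_of_mem i (Finset.mem_range.mpr (by omega)) hzero, hsum]

end IsSpectralDecomp

end SpectralDecomposition

section Tridiagonal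

variable {K R : Type*} [Field K] [Ring R] [Algebra K R]

/-- The monic polynomials `p_i` with `p_0 = 1`, `p_{-1} = 0` and
`λ p_i = p_{i+1} + a_i p_i + x_i p_{i-1}`; the value `x_0` is irrelevant. -/
def threeTermPoly (a x : ℕ → K) : ℕ → K[X]
  | 0 => 1
  | 1 => Polynomial.X - C (a 0)
  | n + 2 => (Polynomial.X - C (a (n + 1))) * threeTermPoly a x (n + 1)
      - C (x (n + 1)) * threeTermPoly a x n

theorem natDegree_threeTermPoly_le (a x : ℕ → K) :
    ∀ n, (threeTermPoly a x n).natDegree ≤ n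
  | 0 => natDegree_one.le
  | 1 => natDegree_X_sub_C_le (a 0)
  | n + 2 =>
    (natDegree_sub_le_of_le
      (natDegree_mul_le_of_le (natDegree_X_sub_C_le _) (natDegree_threeTermPoly_le a x (n + 1)))
      (natDegree_mul_le_of_le (natDegree_C _).le (natDegree_threeTermPoly_le a x n))).trans
      (by omega)

/-- `A` is block tridiagonal with respect to the orthogonal idempotents `e_0, …, e_d`, and the
blocks `e_i A e_i` and `e_i A e_{i+1} A e_i` are the multiples `a_i e_i` and `x_{i+1} e_i` of the
idempotents. -/
structure IsTridiagonal (d : ℕ) (A : R) (e : ℕ → R) (a x : ℕ → K) : Prop where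
  idem : OrthogonalIdempotents e
  sum_eq_one : ∑ i ∈ Finset.range (d + 1), e i = 1
  mul_mul_eq_zero : ∀ i j, (i + 1 < j ∨ j + 1 < i) → e i * A * e j = 0
  mul_mul_self : ∀ i, e i * A * e i = a i • e i
  mul_mul_succ_mul_mul : ∀ i, e i * A * e (i + 1) * A * e i = x (i + 1) • e i

namespace IsTridiagonal

variable {d : ℕ} {A : R} {e : ℕ → R} {a x : ℕ → K}

theorem op (h : IsTridiagonal d A e a x) :
    IsTridiagonal d (MulOpposite.op A) (fun i => MulOpposite.op (e i)) a x where
  idem := ⟨fun i => congrArg MulOpposite.op (h.idem.idem i).eq,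
    fun i j hij => congrArg MulOpposite.op (h.idem.ortho hij.symm)⟩
  sum_eq_one := by rw [← MulOpposite.op_one, ← h.sum_eq_one, Finset.op_sum]
  mul_mul_eq_zero i j hij := by
    simpa only [MulOpposite.op_mul, mul_assoc, MulOpposite.op_zero] using
      congrArg MulOpposite.op (h.mul_mul_eq_zero j i hij.symm)
  mul_mul_self i := by
    simpa only [MulOpposite.op_mul, mul_assoc, MulOpposite.op_smul] using
      congrArg MulOpposite.op (h.mul_mul_self i)
  mul_mul_succ_mul_mul i := by
    simpa only [MulOpposite.op_mul, mul_assoc, MulOpposite.op_smul] using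
      congrArg MulOpposite.op (h.mul_mul_succ_mul_mul i)

theorem mul_idem_eq_sum (h : IsTridiagonal d A e a x) {i : ℕ} {s : Finset ℕ}
    (hs : ∀ j, j ≤ i + 1 → i ≤ j + 1 → j ∈ s) : A * e i = ∑ j ∈ s, e j * A * e i := by
  calc A * e i = ∑ j ∈ Finset.range (d + 1), e j * A * e i := by
        rw [← Finset.sum_mul, ← Finset.sum_mul, h.sum_eq_one, one_mul]
    _ = ∑ j ∈ s, e j * A * e i := Finset.sum_congr_of_eq_on_inter
        (fun j _ hj => h.mul_mul_eq_zero j i (by by_contra; exact hj (hs j (by omega) (by omega))))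
        (fun j _ hj => by rw [idem_eq_zero_of_notMem h.idem h.sum_eq_one hj, zero_mul, zero_mul])
        (fun _ _ _ => rfl)

theorem mul_idem_zero (h : IsTridiagonal d A e a x) : A * e 0 = e 1 * A * e 0 + a 0 • e 0 := by
  rw [h.mul_idem_eq_sum (s := {1, 0}) (by simp; omega), Finset.sum_pair one_ne_zero,
    h.mul_mul_self]

theorem mul_idem_succ (h : IsTridiagonal d A e a x) (i : ℕ) :
    A * e (i + 1) = e (i + 2) * A * e (i + 1) + a (i + 1) • e (i + 1) + e i * A * e (i + 1) := by
  rw [h.mul_idem_eq_sum (s := {i + 2, i + 1, i}) (by simp; omega), Finset.sum_insert (by simp),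
    Finset.sum_pair (by simp), h.mul_mul_self, add_assoc]

theorem aeval_threeTermPoly_mul_idem_zero (h : IsTridiagonal d A e a x) (i : ℕ) :
    e i * (aeval A (threeTermPoly a x i) * e 0) = aeval A (threeTermPoly a x i) * e 0 ∧
      aeval A (threeTermPoly a x (i + 1)) * e 0 =
        e (i + 1) * A * (aeval A (threeTermPoly a x i) * e 0) := by
  induction i with
  | zero => simp [threeTermPoly, (h.idem.idem 0).eq, sub_mul, h.mul_idem_zero,
      ← Algebra.smul_def]
  | succ i ih =>
    obtain ⟨hfix, hstep⟩ := ih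
    set y := aeval A (threeTermPoly a x i) * e 0
    set y' := aeval A (threeTermPoly a x (i + 1)) * e 0
    have hfix' : e (i + 1) * y' = y' := by
      rw [hstep, mul_assoc (e (i + 1)) A, ← mul_assoc (e (i + 1)), (h.idem.idem (i + 1)).eq]
    have hlower : e i * A * y' = x (i + 1) • y := by
      rw [hstep, ← hfix, ← smul_mul_assoc, ← h.mul_mul_succ_mul_mul]
      simp only [mul_assoc]
    have hexpand : A * y' = e (i + 2) * A * y' + a (i + 1) • y' + x (i + 1) • y := by
      rw [← hlower, ← hfix', ← mul_assoc A, h.mul_idem_succ]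
      simp only [add_mul, mul_assoc, smul_mul_assoc]
    refine ⟨hfix', ?_⟩
    calc aeval A (threeTermPoly a x (i + 2)) * e 0
        = A * y' - a (i + 1) • y' - x (i + 1) • y := by
          simp [threeTermPoly, sub_mul, mul_assoc, y, y', ← Algebra.smul_def]
      _ = e (i + 2) * A * y' := by rw [hexpand]; abel

theorem idem_mul_aeval_threeTermPoly (h : IsTridiagonal d A e a x) (i : ℕ) :
    e 0 * aeval A (threeTermPoly a x i) * e i = e 0 * aeval A (threeTermPoly a x i) := by
  simpa only [aeval_op_apply, ← MulOpposite.op_mul, MulOpposite.op_inj] using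
    (h.op.aeval_threeTermPoly_mul_idem_zero i).1

/-- Askey–Wilson duality: both sides are the coefficient of `e_0 E_0` in `e_0 p_i(A) p*_j(A*) E_0`,
computed by moving `p_i(A)`, respectively `p*_j(A*)`, through the other factor. -/
theorem eval_mul_eval_eq {As : R} {E : ℕ → R} {θ θs as xs : ℕ → K}
    (h : IsTridiagonal d A e a x) (hs : IsTridiagonal d As E as xs)
    (hA : IsSpectralDecomp d A E θ) (hAs : IsSpectralDecomp d As e θs) (hne : e 0 * E 0 ≠ 0)
    (i j : ℕ) :
    (threeTermPoly a x i).eval (θ j) * (threeTermPoly as xs j).eval (θs 0) =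
      (threeTermPoly as xs j).eval (θs i) * (threeTermPoly a x i).eval (θ 0) := by
  set p := threeTermPoly a x i
  set q := threeTermPoly as xs j
  have hp : e 0 * aeval A p * e i = e 0 * aeval A p := h.idem_mul_aeval_threeTermPoly i
  have hq : E j * (aeval As q * E 0) = aeval As q * E 0 :=
    (hs.aeval_threeTermPoly_mul_idem_zero j).1
  refine smul_left_injective K hne ?_
  calc (p.eval (θ j) * q.eval (θs 0)) • (e 0 * E 0)
      = e 0 * (aeval A p * E j) * (aeval As q * E 0) := by
        rw [hA.aeval_mul_idem, mul_smul_comm, smul_mul_assoc, mul_assoc, hq, ← mul_assoc,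
          hAs.idem_mul_aeval, smul_mul_assoc, smul_smul]
    _ = e 0 * aeval A p * (e i * aeval As q) * E 0 := by
        simp only [← mul_assoc, hp]
        simp only [mul_assoc, hq]
    _ = (q.eval (θs i) * p.eval (θ 0)) • (e 0 * E 0) := by
        rw [hAs.idem_mul_aeval, mul_smul_comm, hp, smul_mul_assoc, mul_assoc, hA.aeval_mul_idem,
          mul_smul_comm, smul_smul]

end IsTridiagonal

end Tridiagonal

section SplitSum

variable {K : Type*} [Field K]

/-- The polynomial `τ_h = (λ - θ_0) ⋯ (λ - θ_{h-1})`. -/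
abbrev tau (θ : ℕ → K) (h : ℕ) : K[X] :=
  Lagrange.nodal (Finset.range h) θ

/-- The coefficient `τ*_h(θ*_i) / (φ_1 ⋯ φ_h)`. -/
def splitCoeff (θs φ : ℕ → K) (i h : ℕ) : K :=
  (tau θs h).eval (θs i) / ∏ l ∈ Finset.Icc 1 h, φ l

/-- The polynomial `∑_{h ≤ i} τ*_h(θ*_i) / (φ_1 ⋯ φ_h) τ_h`. -/
def splitSum (θ θs φ : ℕ → K) (i : ℕ) : K[X] :=
  ∑ h ∈ Finset.range (i + 1), splitCoeff θs φ i h • tau θ h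

theorem splitSum_eq_sum (θ θs φ : ℕ → K) (i : ℕ) :
    splitSum θ θs φ i = ∑ h ∈ Finset.range (i + 1),
      ((∏ l ∈ Finset.range h, (θs i - θs l)) / ∏ l ∈ Finset.Icc 1 h, φ l) •
        ∏ l ∈ Finset.range h, (Polynomial.X - C (θ l)) := by
  simp only [splitSum, splitCoeff, Lagrange.eval_nodal]
  rfl

theorem splitCoeff_eq_zero {θs φ : ℕ → K} {i h : ℕ} (hi : i < h) : splitCoeff θs φ i h = 0 := by
  rw [splitCoeff, Lagrange.eval_nodal_at_node (Finset.mem_range.mpr hi), zero_div]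

theorem splitCoeff_succ_mul {θs φ : ℕ → K} {h : ℕ} (hφ : φ (h + 1) ≠ 0) (i : ℕ) :
    splitCoeff θs φ i (h + 1) * φ (h + 1) = splitCoeff θs φ i h * (θs i - θs h) := by
  simp only [splitCoeff, Lagrange.eval_nodal, Finset.prod_range_succ,
    Finset.prod_Icc_succ_top (Nat.le_add_left 1 h)]
  field_simp

theorem natDegree_splitSum_le (θ θs φ : ℕ → K) (i : ℕ) : (splitSum θ θs φ i).natDegree ≤ i :=
  natDegree_sum_le_of_forall_le _ _ fun h hh => (natDegree_smul_le _ _).trans <| by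
    rw [Lagrange.natDegree_nodal, Finset.card_range]
    exact Finset.mem_range_succ_iff.mp hh

theorem eval_splitSum {n i : ℕ} (hi : i ≤ n) (θ θs φ : ℕ → K) (z : K) :
    (splitSum θ θs φ i).eval z = ∑ h ∈ Finset.range (n + 1),
      splitCoeff θs φ i h * (tau θ h).eval z := by
  simp only [splitSum, eval_finsetSum, eval_smul, smul_eq_mul]
  refine Finset.sum_subset (by simpa using hi) fun h _ hh => ?_
  rw [splitCoeff_eq_zero (by simpa using hh), zero_mul]

theorem eval_splitSum_comm (θ θs φ : ℕ → K) (i j : ℕ) :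
    (splitSum θ θs φ i).eval (θ j) = (splitSum θs θ φ j).eval (θs i) := by
  rw [eval_splitSum (le_max_left i j), eval_splitSum (le_max_right i j)]
  refine Finset.sum_congr rfl fun h _ => ?_
  simp only [splitCoeff]
  ring

theorem eval_splitSum_zero (θ θs φ : ℕ → K) (i : ℕ) : (splitSum θ θs φ i).eval (θ 0) = 1 := by
  rw [eval_splitSum_comm]
  simp [splitSum, splitCoeff, tau]

theorem map_sum_splitCoeff_smul {V : Type*} [AddCommGroup V] [Module K V]
    {T : Module.End K V} {s : ℕ → V} {θs φ : ℕ → K} {d : ℕ} (h₀ : T (s 0) = θs 0 • s 0)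
    (hs : ∀ h < d, φ (h + 1) ≠ 0 ∧ T (s (h + 1)) = θs (h + 1) • s (h + 1) + φ (h + 1) • s h)
    {i : ℕ} (hi : i ≤ d) :
    T (∑ h ∈ Finset.range (i + 1), splitCoeff θs φ i h • s h) =
      θs i • ∑ h ∈ Finset.range (i + 1), splitCoeff θs φ i h • s h := by
  have htelescope : ∀ n ≤ d, T (∑ h ∈ Finset.range (n + 1), splitCoeff θs φ i h • s h) =
      θs i • (∑ h ∈ Finset.range (n + 1), splitCoeff θs φ i h • s h) -
        (splitCoeff θs φ i n * (θs i - θs n)) • s n := by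
    intro n hn
    induction n with
    | zero =>
      simp only [zero_add, Finset.sum_range_one, map_smul, h₀]
      module
    | succ n ih =>
      obtain ⟨hφ, hT⟩ := hs n hn
      rw [Finset.sum_range_succ, map_add, ih (by omega), map_smul, hT, ← splitCoeff_succ_mul hφ]
      module
  rw [htelescope i hi, sub_self, mul_zero, zero_smul, sub_zero]

end SplitSum

/-- A Leonard system of diameter `d` on `V`: operators `A` and `A*` with spectral decompositions
`A = ∑ θ_i E_i` and `A* = ∑ θ*_i E*_i`, each tridiagonal with respect to the idempotents of the
other and together acting irreducibly, the nonzero idempotents having rank one. Only the rank of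
the `E*_i` is bounded here; for the `E_i` see `finrank_range_E_le_one`. -/
structure LeonardSystem (K V : Type*) [Field K] [AddCommGroup V] [Module K V] (d : ℕ) where
  A : Module.End K V
  Astar : Module.End K V
  E : ℕ → Module.End K V
  Estar : ℕ → Module.End K V
  θ : ℕ → K
  θstar : ℕ → K
  spec : IsSpectralDecomp d A E θ
  specStar : IsSpectralDecomp d Astar Estar θstar
  E_mul_Astar_mul_E : ∀ i j, (i + 1 < j ∨ j + 1 < i) → E i * Astar * E j = 0
  Estar_mul_A_mul_Estar : ∀ i j, (i + 1 < j ∨ j + 1 < i) → Estar i * A * Estar j = 0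
  E_ne_zero : ∀ i ≤ d, E i ≠ 0
  Estar_ne_zero : ∀ i ≤ d, Estar i ≠ 0
  finrank_range_Estar_le_one : ∀ i, Module.finrank K (LinearMap.range (Estar i)) ≤ 1
  irreducible : ∀ U : Submodule K V, U ≤ U.comap A → U ≤ U.comap Astar → U = ⊥ ∨ U = ⊤

namespace LeonardSystem

variable {K V : Type*} [Field K] [AddCommGroup V] [Module K V] {d : ℕ} (Φ : LeonardSystem K V d)

/-- The scalar `a_i = tr(E*_i A)`. -/
def a (i : ℕ) : K :=
  LinearMap.trace K V (Φ.Estar i * Φ.A)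

/-- The scalar `x_i = tr(E*_i A E*_{i-1} A)`, with `x_0 = 0`. -/
def x (i : ℕ) : K :=
  if i = 0 then 0 else LinearMap.trace K V (Φ.Estar i * Φ.A * Φ.Estar (i - 1) * Φ.A)

/-- The monic polynomial `p_i` of the system, which maps `E*_0 V` to `E*_i V`. -/
def p (i : ℕ) : K[X] :=
  threeTermPoly Φ.a Φ.x i

/-- The subspace `E*_0 V + ⋯ + E*_k V`. -/
def flag (k : ℕ) : Submodule K V :=
  ⨅ j ∈ Set.Ioi k, LinearMap.ker (Φ.Estar j)

/-- The sequence `φ` is the first split sequence: `(A - θ_h)(A* - θ*_{h+1})` acts on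
`τ_{h+1}(A) E*_0 V` as the nonzero scalar `φ_{h+1}`, for `0 ≤ h < d`. -/
def IsFirstSplitSequence (φ : ℕ → K) : Prop :=
  ∀ h < d, φ (h + 1) ≠ 0 ∧
    (Φ.A - Φ.θ h • 1) * (Φ.Astar - Φ.θstar (h + 1) • 1) *
        (aeval Φ.A (tau Φ.θ (h + 1)) * Φ.Estar 0) =
      φ (h + 1) • (aeval Φ.A (tau Φ.θ (h + 1)) * Φ.Estar 0)

variable {Φ} in
theorem mem_flag {k : ℕ} {y : V} : y ∈ Φ.flag k ↔ ∀ j, k < j → Φ.Estar j y = 0 := by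
  simp only [flag, Submodule.mem_iInf, Set.mem_Ioi, LinearMap.mem_ker]

theorem sum_Estar_apply (y : V) : ∑ i ∈ Finset.range (d + 1), Φ.Estar i y = y := by
  rw [← LinearMap.sum_apply, Φ.specStar.sum_eq_one, Module.End.one_apply]

theorem Estar_apply_Estar_apply (i j : ℕ) (y : V) :
    Φ.Estar i (Φ.Estar j y) = if i = j then Φ.Estar i y else 0 := by
  rw [← Module.End.mul_apply, Φ.specStar.idem.mul_eq]
  split_ifs with h
  · rfl
  · rfl

theorem Estar_apply_self (i : ℕ) (y : V) : Φ.Estar i (Φ.Estar i y) = Φ.Estar i y := by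
  rw [Φ.Estar_apply_Estar_apply, if_pos rfl]

theorem Estar_apply_mem_flag (k : ℕ) (y : V) : Φ.Estar k y ∈ Φ.flag k :=
  mem_flag.mpr fun j hj => by rw [Φ.Estar_apply_Estar_apply, if_neg hj.ne']

theorem Estar_apply_Astar_apply (i : ℕ) (y : V) :
    Φ.Estar i (Φ.Astar y) = Φ.θstar i • Φ.Estar i y :=
  LinearMap.congr_fun (Φ.specStar.idem_mul i) y

theorem Estar_A_apply_eq_sum (j : ℕ) (y : V) :
    Φ.Estar j (Φ.A y) = ∑ i ∈ Finset.range (d + 1), Φ.Estar j (Φ.A (Φ.Estar i y)) := by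
  rw [← map_sum, ← map_sum, Φ.sum_Estar_apply]

theorem Estar_A_apply_of_mem_flag {k j : ℕ} (hkj : k < j) {y : V} (hy : y ∈ Φ.flag k) :
    Φ.Estar j (Φ.A y) = Φ.Estar j (Φ.A (Φ.Estar k y)) := by
  rw [Φ.Estar_A_apply_eq_sum j y, Φ.Estar_A_apply_eq_sum j (Φ.Estar k y)]
  refine Finset.sum_congr rfl fun i _ => ?_
  rw [Φ.Estar_apply_Estar_apply]
  split_ifs with hik
  · rfl
  · rcases Nat.lt_or_gt_of_ne hik with hi | hi
    · exact (LinearMap.congr_fun (Φ.Estar_mul_A_mul_Estar j i (by omega)) y).trans (by simp)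
    · rw [mem_flag.mp hy i hi]

theorem A_apply_mem_flag_succ {k : ℕ} {y : V} (hy : y ∈ Φ.flag k) : Φ.A y ∈ Φ.flag (k + 1) := by
  refine mem_flag.mpr fun j hj => ?_
  rw [Φ.Estar_A_apply_of_mem_flag (by omega) hy]
  exact LinearMap.congr_fun (Φ.Estar_mul_A_mul_Estar j k (by omega)) y

theorem Astar_apply_mem_flag {k : ℕ} {y : V} (hy : y ∈ Φ.flag k) : Φ.Astar y ∈ Φ.flag k :=
  mem_flag.mpr fun j hj => by rw [Φ.Estar_apply_Astar_apply, mem_flag.mp hy j hj, smul_zero]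

theorem flag_mono {k l : ℕ} (hkl : k ≤ l) : Φ.flag k ≤ Φ.flag l := fun _ hy =>
  mem_flag.mpr fun j hj => mem_flag.mp hy j (hkl.trans_lt hj)

theorem exists_Estar_apply_eq {i : ℕ} (hi : i ≤ d) : ∃ v, v ≠ 0 ∧ Φ.Estar i v = v := by
  obtain ⟨y, hy⟩ := DFunLike.ne_iff.mp (Φ.Estar_ne_zero i hi)
  exact ⟨Φ.Estar i y, hy, Φ.Estar_apply_self i y⟩

theorem E_apply_aeval_apply (g : K[X]) (j : ℕ) (y : V) :
    Φ.E j (aeval Φ.A g y) = g.eval (Φ.θ j) • Φ.E j y :=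
  LinearMap.congr_fun (Φ.spec.idem_mul_aeval g j) y

section FiniteDimensional

variable [FiniteDimensional K V]

theorem exists_eq_smul_of_Estar_apply_eq {i : ℕ} {v y : V} (hv : Φ.Estar i v = v) (hv0 : v ≠ 0)
    (hy : Φ.Estar i y = y) : ∃ c : K, y = c • v := by
  obtain ⟨c, hc⟩ := exists_eq_smul_of_finrank_le_one (Φ.finrank_range_Estar_le_one i)
    (v := ⟨v, v, hv⟩) (fun h => hv0 (congrArg Subtype.val h)) ⟨y, y, hy⟩
  exact ⟨c, congrArg Subtype.val hc⟩

theorem isTridiagonal : IsTridiagonal d Φ.A Φ.Estar Φ.a Φ.x where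
  idem := Φ.specStar.idem
  sum_eq_one := Φ.specStar.sum_eq_one
  mul_mul_eq_zero := Φ.Estar_mul_A_mul_Estar
  mul_mul_self i :=
    mul_mul_eq_trace_smul_of_finrank_range_le_one (Φ.finrank_range_Estar_le_one i) Φ.A
  mul_mul_succ_mul_mul i := by
    have htrace : Φ.x (i + 1) =
        LinearMap.trace K V (Φ.Estar i * (Φ.A * Φ.Estar (i + 1) * Φ.A)) := by
      rw [x, if_neg i.succ_ne_zero, Nat.add_sub_cancel, mul_assoc _ (Φ.Estar i),
        LinearMap.trace_mul_comm]
      simp only [mul_assoc]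
    rw [htrace, ← mul_mul_eq_trace_smul_of_finrank_range_le_one (Φ.finrank_range_Estar_le_one i)]
    simp only [mul_assoc]

/-- If `A` did not raise `z`, then `flag k` would be invariant under `A` and `A*`. -/
theorem eq_zero_of_Estar_succ_A_apply_eq_zero {k : ℕ} (hk : k < d) {z : V}
    (hz : Φ.Estar k z = z) (hAz : Φ.Estar (k + 1) (Φ.A z) = 0) : z = 0 := by
  by_contra hz0
  have hinv : Φ.flag k ≤ (Φ.flag k).comap Φ.A := fun y hy => mem_flag.mpr fun j hj => by
    rcases (Nat.succ_le_of_lt hj).eq_or_lt with rfl | hj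
    · obtain ⟨c, hc⟩ := Φ.exists_eq_smul_of_Estar_apply_eq hz hz0 (Φ.Estar_apply_self k y)
      rw [Φ.Estar_A_apply_of_mem_flag k.lt_succ_self hy, hc, map_smul, map_smul, hAz, smul_zero]
    · exact mem_flag.mp (Φ.A_apply_mem_flag_succ hy) j hj
  rcases Φ.irreducible _ hinv fun y => Φ.Astar_apply_mem_flag with h | h
  · exact hz0 ((Submodule.mem_bot K).mp (h ▸ hz ▸ Φ.Estar_apply_mem_flag k z))
  · refine Φ.Estar_ne_zero (k + 1) hk (LinearMap.ext fun y => ?_)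
    exact mem_flag.mp (h ▸ Submodule.mem_top : y ∈ Φ.flag k) (k + 1) k.lt_succ_self

theorem eq_zero_of_mem_flag_of_A_apply_eq_smul {k : ℕ} (hk : k < d) {y : V} (hy : y ∈ Φ.flag k)
    {c : K} (hAy : Φ.A y = c • y) : y = 0 := by
  have htop : ∀ l < d, y ∈ Φ.flag l → Φ.Estar l y = 0 := fun l hl hyl => by
    refine Φ.eq_zero_of_Estar_succ_A_apply_eq_zero hl (Φ.Estar_apply_self l y) ?_
    rw [← Φ.Estar_A_apply_of_mem_flag l.lt_succ_self hyl, hAy, map_smul,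
      mem_flag.mp hyl (l + 1) l.lt_succ_self, smul_zero]
  induction k with
  | zero =>
    rw [← Φ.sum_Estar_apply y]
    refine Finset.sum_eq_zero fun i _ => ?_
    rcases i.eq_zero_or_pos with rfl | hi
    · exact htop 0 hk hy
    · exact mem_flag.mp hy i hi
  | succ k ih =>
    refine ih (by omega) (mem_flag.mpr fun j hj => ?_)
    rcases (Nat.succ_le_of_lt hj).eq_or_lt with rfl | hj
    · exact htop (k + 1) hk hy
    · exact mem_flag.mp hy j hj

section Cyclic

variable {Φ} {v : V}

theorem Estar_apply_aeval_p_apply (hv : Φ.Estar 0 v = v) (i : ℕ) :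
    Φ.Estar i (aeval Φ.A (Φ.p i) v) = aeval Φ.A (Φ.p i) v := by
  simpa only [Module.End.mul_apply, hv, p] using
    LinearMap.congr_fun (Φ.isTridiagonal.aeval_threeTermPoly_mul_idem_zero i).1 v

theorem aeval_p_succ_apply (hv : Φ.Estar 0 v = v) (i : ℕ) :
    aeval Φ.A (Φ.p (i + 1)) v = Φ.Estar (i + 1) (Φ.A (aeval Φ.A (Φ.p i) v)) := by
  simpa only [Module.End.mul_apply, hv, p] using
    LinearMap.congr_fun (Φ.isTridiagonal.aeval_threeTermPoly_mul_idem_zero i).2 v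

theorem aeval_p_apply_ne_zero (hv : Φ.Estar 0 v = v) (hv0 : v ≠ 0) {i : ℕ} (hi : i ≤ d) :
    aeval Φ.A (Φ.p i) v ≠ 0 := by
  induction i with
  | zero => simpa [p, threeTermPoly] using hv0
  | succ i ih =>
    rw [aeval_p_succ_apply hv]
    exact mt (Φ.eq_zero_of_Estar_succ_A_apply_eq_zero hi (Estar_apply_aeval_p_apply hv i))
      (ih (by omega))

theorem exists_aeval_apply_eq (hv : Φ.Estar 0 v = v) (hv0 : v ≠ 0) (y : V) :
    ∃ g : K[X], aeval Φ.A g v = y := by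
  suffices h : ∀ i ∈ Finset.range (d + 1),
      Φ.Estar i y ∈ LinearMap.range (LinearMap.applyₗ v ∘ₗ (aeval Φ.A).toLinearMap) by
    simpa [Φ.sum_Estar_apply] using Submodule.sum_mem _ h
  intro i hi
  obtain ⟨c, hc⟩ := Φ.exists_eq_smul_of_Estar_apply_eq (Estar_apply_aeval_p_apply hv i)
    (aeval_p_apply_ne_zero hv hv0 (Finset.mem_range_succ_iff.mp hi)) (Φ.Estar_apply_self i y)
  exact ⟨c • Φ.p i, by simp [hc]⟩

theorem E_apply_ne_zero (hv : Φ.Estar 0 v = v) (hv0 : v ≠ 0) {j : ℕ} (hj : j ≤ d) :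
    Φ.E j v ≠ 0 := fun h => Φ.E_ne_zero j hj <| LinearMap.ext fun y => by
  obtain ⟨g, rfl⟩ := exists_aeval_apply_eq hv hv0 y
  rw [Φ.E_apply_aeval_apply, h, smul_zero, LinearMap.zero_apply]

theorem eq_of_aeval_apply_eq (hv : Φ.Estar 0 v = v) (hv0 : v ≠ 0) {f g : K[X]}
    (hf : f.natDegree ≤ d) (hg : g.natDegree ≤ d) (hfg : aeval Φ.A f v = aeval Φ.A g v) :
    f = g := by
  refine Φ.spec.eq_of_eval_eq hf hg fun j hj =>
    smul_left_injective K (E_apply_ne_zero hv hv0 hj) ?_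
  change f.eval (Φ.θ j) • Φ.E j v = g.eval (Φ.θ j) • Φ.E j v
  rw [← Φ.E_apply_aeval_apply, hfg, Φ.E_apply_aeval_apply]

end Cyclic

theorem finrank_range_E_le_one (j : ℕ) : Module.finrank K (LinearMap.range (Φ.E j)) ≤ 1 := by
  obtain ⟨v, hv0, hv⟩ := Φ.exists_Estar_apply_eq (Nat.zero_le d)
  refine finrank_le_one ⟨Φ.E j v, v, rfl⟩ ?_
  rintro ⟨_, y, rfl⟩
  obtain ⟨g, rfl⟩ := exists_aeval_apply_eq hv hv0 y
  exact ⟨g.eval (Φ.θ j), Subtype.ext (Φ.E_apply_aeval_apply g j v).symm⟩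

/-- The Leonard system with the roles of `A` and `A*` exchanged. -/
def dual : LeonardSystem K V d where
  A := Φ.Astar
  Astar := Φ.A
  E := Φ.Estar
  Estar := Φ.E
  θ := Φ.θstar
  θstar := Φ.θ
  spec := Φ.specStar
  specStar := Φ.spec
  E_mul_Astar_mul_E := Φ.Estar_mul_A_mul_Estar
  Estar_mul_A_mul_Estar := Φ.E_mul_Astar_mul_E
  E_ne_zero := Φ.Estar_ne_zero
  Estar_ne_zero := Φ.E_ne_zero
  finrank_range_Estar_le_one := Φ.finrank_range_E_le_one
  irreducible U hA hAstar := Φ.irreducible U hAstar hA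

theorem Estar_zero_mul_E_zero_ne_zero : Φ.Estar 0 * Φ.E 0 ≠ 0 := by
  obtain ⟨w, hw0, hw⟩ := Φ.dual.exists_Estar_apply_eq (Nat.zero_le d)
  intro h
  apply E_apply_ne_zero hw hw0 (Nat.zero_le d)
  rw [← hw]
  exact LinearMap.congr_fun h w

theorem eval_p_mul_eval_dual_p (i j : ℕ) :
    (Φ.p i).eval (Φ.θ j) * (Φ.dual.p j).eval (Φ.θstar 0) =
      (Φ.dual.p j).eval (Φ.θstar i) * (Φ.p i).eval (Φ.θ 0) :=
  Φ.isTridiagonal.eval_mul_eval_eq Φ.dual.isTridiagonal Φ.spec Φ.specStar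
    Φ.Estar_zero_mul_E_zero_ne_zero i j

theorem p_ne_zero {i : ℕ} (hi : i ≤ d) : Φ.p i ≠ 0 := by
  obtain ⟨v, hv0, hv⟩ := Φ.exists_Estar_apply_eq (Nat.zero_le d)
  intro h
  exact aeval_p_apply_ne_zero hv hv0 hi (by rw [h, map_zero, LinearMap.zero_apply])

end FiniteDimensional

section SplitSequence

variable {φ : ℕ → K} {v : V}

theorem aeval_tau_succ_apply (h : ℕ) (y : V) :
    aeval Φ.A (tau Φ.θ (h + 1)) y =
      Φ.A (aeval Φ.A (tau Φ.θ h) y) - Φ.θ h • aeval Φ.A (tau Φ.θ h) y := by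
  rw [tau, Lagrange.nodal, Finset.prod_range_succ, mul_comm, map_mul]
  simp [tau, Lagrange.nodal]

theorem aeval_tau_apply_mem_flag (hv : Φ.Estar 0 v = v) (h : ℕ) :
    aeval Φ.A (tau Φ.θ h) v ∈ Φ.flag h := by
  induction h with
  | zero => simpa [hv, tau] using Φ.Estar_apply_mem_flag 0 v
  | succ h ih =>
    rw [aeval_tau_succ_apply]
    exact sub_mem (Φ.A_apply_mem_flag_succ ih)
      (Submodule.smul_mem _ _ (Φ.flag_mono h.le_succ ih))

theorem Astar_sub_smul_apply_mem_flag {k : ℕ} {y : V} (hy : y ∈ Φ.flag (k + 1)) :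
    Φ.Astar y - Φ.θstar (k + 1) • y ∈ Φ.flag k := by
  refine mem_flag.mpr fun j hj => ?_
  rw [map_sub, map_smul, Φ.Estar_apply_Astar_apply]
  rcases (Nat.succ_le_of_lt hj).eq_or_lt with rfl | hj
  · exact sub_self _
  · rw [mem_flag.mp hy j hj, smul_zero, smul_zero, sub_zero]

namespace IsFirstSplitSequence

variable {Φ} [FiniteDimensional K V]

/-- The difference of the two sides lies in `flag h` and is an eigenvector of `A`. -/
theorem Astar_apply (hφ : Φ.IsFirstSplitSequence φ) (hv : Φ.Estar 0 v = v) {h : ℕ} (hh : h < d) :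
    Φ.Astar (aeval Φ.A (tau Φ.θ (h + 1)) v) =
      Φ.θstar (h + 1) • aeval Φ.A (tau Φ.θ (h + 1)) v +
        φ (h + 1) • aeval Φ.A (tau Φ.θ h) v := by
  have hsucc := Φ.aeval_tau_succ_apply h v
  have hflag := Φ.aeval_tau_apply_mem_flag hv h
  have hflag' := Φ.aeval_tau_apply_mem_flag hv (h + 1)
  have hsplit := LinearMap.congr_fun (hφ h hh).2 v
  simp only [Module.End.mul_apply, LinearMap.sub_apply, LinearMap.smul_apply,
    Module.End.one_apply, hv] at hsplit
  set s := aeval Φ.A (tau Φ.θ h) v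
  set s' := aeval Φ.A (tau Φ.θ (h + 1)) v
  have hzero : Φ.Astar s' - Φ.θstar (h + 1) • s' - φ (h + 1) • s = 0 := by
    refine Φ.eq_zero_of_mem_flag_of_A_apply_eq_smul hh (c := Φ.θ h)
      (sub_mem (Φ.Astar_sub_smul_apply_mem_flag hflag') (Submodule.smul_mem _ _ hflag)) ?_
    rw [map_sub, map_smul, smul_sub, ← sub_eq_zero, sub_sub_sub_comm, hsplit, hsucc]
    module
  rw [← sub_eq_zero, ← hzero]
  abel

theorem Estar_apply_aeval_splitSum_apply (hφ : Φ.IsFirstSplitSequence φ) (hv : Φ.Estar 0 v = v)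
    {i : ℕ} (hi : i ≤ d) :
    Φ.Estar i (aeval Φ.A (splitSum Φ.θ Φ.θstar φ i) v) =
      aeval Φ.A (splitSum Φ.θ Φ.θstar φ i) v := by
  refine Φ.specStar.apply_eq_self hi ?_
  have hzero : Φ.Astar v = Φ.θstar 0 • v := by
    rw [← hv]
    exact LinearMap.congr_fun (Φ.specStar.mul_idem 0) v
  simpa [splitSum] using map_sum_splitCoeff_smul
    (s := fun h => aeval Φ.A (tau Φ.θ h) v) (by simpa [tau] using hzero)
    (fun h hh => ⟨(hφ h hh).1, hφ.Astar_apply hv hh⟩) hi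

theorem inv_eval_smul_p (hφ : Φ.IsFirstSplitSequence φ) {i : ℕ} (hi : i ≤ d) :
    ((Φ.p i).eval (Φ.θ 0))⁻¹ • Φ.p i = splitSum Φ.θ Φ.θstar φ i := by
  obtain ⟨v, hv0, hv⟩ := Φ.exists_Estar_apply_eq (Nat.zero_le d)
  obtain ⟨c, hc⟩ := Φ.exists_eq_smul_of_Estar_apply_eq (Estar_apply_aeval_p_apply hv i)
    (aeval_p_apply_ne_zero hv hv0 hi) (hφ.Estar_apply_aeval_splitSum_apply hv hi)
  have hsmul : splitSum Φ.θ Φ.θstar φ i = c • Φ.p i :=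
    eq_of_aeval_apply_eq hv hv0 ((natDegree_splitSum_le _ _ _ i).trans hi)
      ((natDegree_smul_le c _).trans ((natDegree_threeTermPoly_le _ _ i).trans hi))
      (by rw [hc, map_smul, LinearMap.smul_apply])
  have hone : c * (Φ.p i).eval (Φ.θ 0) = 1 := by
    rw [← smul_eq_mul, ← eval_smul, ← hsmul, eval_splitSum_zero]
  rw [hsmul, eq_inv_of_mul_eq_one_left hone]

theorem eval_p_ne_zero (hφ : Φ.IsFirstSplitSequence φ) {i : ℕ} (hi : i ≤ d) :
    (Φ.p i).eval (Φ.θ 0) ≠ 0 := fun h => by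
  have hone := eval_splitSum_zero Φ.θ Φ.θstar φ i
  rw [← hφ.inv_eval_smul_p hi, h, _root_.inv_zero, zero_smul, eval_zero] at hone
  exact zero_ne_one hone

theorem inv_eval_smul_dual_p (hφ : Φ.IsFirstSplitSequence φ) {j : ℕ} (hj : j ≤ d) :
    ((Φ.dual.p j).eval (Φ.θstar 0))⁻¹ • Φ.dual.p j = splitSum Φ.θstar Φ.θ φ j := by
  have hsmul : Φ.dual.p j = (Φ.dual.p j).eval (Φ.θstar 0) • splitSum Φ.θstar Φ.θ φ j := by
    refine Φ.specStar.eq_of_eval_eq ((natDegree_threeTermPoly_le _ _ j).trans hj)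
      ((natDegree_smul_le _ _).trans ((natDegree_splitSum_le _ _ _ j).trans hj)) fun i hi => ?_
    have hne := hφ.eval_p_ne_zero hi
    rw [eval_smul, ← eval_splitSum_comm, ← hφ.inv_eval_smul_p hi, eval_smul, smul_eq_mul,
      smul_eq_mul]
    field_simp
    rw [← eval_p_mul_eval_dual_p, mul_comm]
  have hne : (Φ.dual.p j).eval (Φ.θstar 0) ≠ 0 := fun h =>
    Φ.dual.p_ne_zero hj (by rw [hsmul, h, zero_smul])
  exact (inv_smul_eq_iff₀ hne).mpr hsmul

end IsFirstSplitSequence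

end SplitSequence

end LeonardSystem

section TerwilligerAlgebra

namespace TSetup

variable (S : TSetup X)

theorem Estar_eq_diagonal (i : ℕ) :
    S.Estar i = Matrix.diagonal fun y => if S.G.dist S.x y = i then 1 else 0 := by
  ext y z
  rw [Matrix.diagonal_apply]
  rcases le_or_gt i S.D with hi | hi
  · rw [S.hEstar i hi, ite_and]
  · simp [S.hEstarzero i hi, ((S.hDiamLe S.x y).trans_lt hi).ne]

theorem Astar_eq_diagonal : S.Astar = Matrix.diagonal ((Fintype.card X : ℂ) • S.E 1 S.x) := by
  ext y z
  rw [S.hAstar, Matrix.diagonal_apply, Pi.smul_apply, smul_eq_mul]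

theorem orthogonalIdempotents_E : OrthogonalIdempotents S.E := by
  have hzero {i : ℕ} (hi : ¬i ≤ S.D) : S.E i = 0 := S.hEzero i (not_le.mp hi)
  rw [OrthogonalIdempotents.iff_mul_eq]
  intro i j
  by_cases hi : i ≤ S.D
  · by_cases hj : j ≤ S.D
    · exact S.hEidem i j hi hj
    · rw [hzero hj, mul_zero, if_neg (by rintro rfl; exact hj hi)]
  · simp [hzero hi]

theorem orthogonalIdempotents_Estar : OrthogonalIdempotents S.Estar where
  idem i := by simp [IsIdempotentElem, Estar_eq_diagonal]
  ortho i j hij := by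
    simp only [Estar_eq_diagonal, Matrix.diagonal_mul_diagonal, Matrix.diagonal_eq_zero]
    ext y
    rcases eq_or_ne (S.G.dist S.x y) i with rfl | hi
    · simp [hij]
    · simp [hi]

theorem sum_Estar : ∑ i ∈ Finset.range (S.D + 1), S.Estar i = 1 := by
  ext y z
  simp [Estar_eq_diagonal, Matrix.sum_apply, Matrix.diagonal_apply, Matrix.one_apply,
    S.hDiamLe S.x y]

theorem isSpectralDecomp : IsSpectralDecomp S.D S.A S.E fun i => (S.θ i : ℂ) where
  idem := S.orthogonalIdempotents_E
  sum_eq_one := S.hEsum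
  eq_sum := S.hAspec
  injOn i hi j hj hij := S.hθinj i j (Finset.mem_range_succ_iff.mp hi)
    (Finset.mem_range_succ_iff.mp hj) (Complex.ofReal_injective hij)

theorem isSpectralDecomp_star :
    IsSpectralDecomp S.D S.Astar S.Estar fun i => (S.θstar i : ℂ) where
  idem := S.orthogonalIdempotents_Estar
  sum_eq_one := S.sum_Estar
  eq_sum := S.hAstarspec
  injOn i hi j hj hij := S.hθstarinj i j (Finset.mem_range_succ_iff.mp hi)
    (Finset.mem_range_succ_iff.mp hj) (Complex.ofReal_injective hij)

theorem A_mem_T : S.A ∈ S.T := Algebra.subset_adjoin (by simp)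

theorem Astar_mem_T : S.Astar ∈ S.T := Algebra.subset_adjoin (by simp)

theorem E_mem_T (i : ℕ) : S.E i ∈ S.T :=
  Algebra.adjoin_mono (by simp) (S.isSpectralDecomp.mem_adjoin i)

theorem Estar_mem_T (i : ℕ) : S.Estar i ∈ S.T :=
  Algebra.adjoin_mono (by simp) (S.isSpectralDecomp_star.mem_adjoin i)

theorem dist_le_succ_of_adj {y z : X} (h : S.G.Adj y z) :
    S.G.dist S.x z ≤ S.G.dist S.x y + 1 := by
  rw [← SimpleGraph.dist_eq_one_iff_adj.mpr h]
  exact S.hGconn.dist_triangle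

theorem Estar_mul_A_mul_Estar (i j : ℕ) (hij : i + 1 < j ∨ j + 1 < i) :
    S.Estar i * S.A * S.Estar j = 0 := by
  ext y z
  simp only [Estar_eq_diagonal, Matrix.mul_diagonal, Matrix.diagonal_mul, S.hA]
  by_cases hyz : S.G.Adj y z
  · have := S.dist_le_succ_of_adj hyz
    have := S.dist_le_succ_of_adj hyz.symm
    split_ifs <;> first | omega | simp
  · simp [hyz]

theorem isHermitian_E (i : ℕ) : (S.E i).IsHermitian := by
  rw [Matrix.IsHermitian, Matrix.conjTranspose, S.hEsymm]
  exact S.hEreal i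

theorem isHermitian_Astar : S.Astar.IsHermitian := by
  rw [Astar_eq_diagonal, Matrix.isHermitian_diagonal_iff]
  intro y
  have h := congrFun (congrFun (S.hEreal 1) S.x) y
  simpa [IsSelfAdjoint] using Or.inl h

theorem E_one_mul_hadamard_eq_zero {i j : ℕ} (hi : i ≤ S.D) (hj : j ≤ S.D)
    (hij : i + 1 < j ∨ j + 1 < i) : S.E 1 * (S.E i ⊙ S.E j) = 0 := by
  have hD : 1 ≤ S.D := le_trans (by norm_num) S.hD3
  rw [S.hKrein i j hi hj, mul_smul_comm, Finset.mul_sum, Finset.sum_eq_zero, smul_zero]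
  intro h _
  rw [mul_smul_comm, S.orthogonalIdempotents_E.mul_eq]
  split_ifs with h1
  · rw [← h1, S.hQpoly0 1 i j hD hi hj (by omega), Complex.ofReal_zero, zero_smul]
  · exact smul_zero _

theorem trace_Astar_mul_E_mul_Astar_mul_E (i j : ℕ) :
    Matrix.trace (S.Astar * S.E i * (S.Astar * S.E j)) =
      (Fintype.card X : ℂ) • (S.E 1 * (S.E i ⊙ S.E j)) S.x ⬝ᵥ
        ((Fintype.card X : ℂ) • S.E 1 S.x) := by
  rw [Matrix.mul_apply_eq_vecMul, ← Matrix.smul_vecMul, Matrix.dotProduct_vecMul_hadamard,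
    Matrix.transpose_mul, S.hEsymm, Matrix.diagonal_transpose, ← Astar_eq_diagonal]

open scoped ComplexOrder in
theorem E_mul_Astar_mul_E (i j : ℕ) (hij : i + 1 < j ∨ j + 1 < i) :
    S.E i * S.Astar * S.E j = 0 := by
  rcases lt_or_ge S.D i with hi | hi
  · rw [S.hEzero i hi, zero_mul, zero_mul]
  rcases lt_or_ge S.D j with hj | hj
  · rw [S.hEzero j hj, mul_zero]
  have hidem (k : ℕ) : S.E k * S.E k = S.E k := S.orthogonalIdempotents_E.idem k
  rw [← Matrix.trace_mul_conjTranspose_self_eq_zero_iff]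
  calc Matrix.trace (S.E i * S.Astar * S.E j * (S.E i * S.Astar * S.E j)ᴴ)
      = Matrix.trace (S.E i * (S.Astar * (S.E j * S.E j) * (S.Astar * S.E i))) := by
        simp only [Matrix.conjTranspose_mul, (S.isHermitian_E _).eq, S.isHermitian_Astar.eq,
          mul_assoc]
    _ = Matrix.trace (S.Astar * S.E j * (S.Astar * S.E i)) := by
        rw [Matrix.trace_mul_comm, hidem, mul_assoc _ _ (S.E i), mul_assoc S.Astar (S.E i), hidem]
    _ = 0 := by
        rw [trace_Astar_mul_E_mul_Astar_mul_E, S.E_one_mul_hadamard_eq_zero hj hi hij.symm]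
        change (_ • (0 : X → ℂ)) ⬝ᵥ _ = 0
        rw [smul_zero, zero_dotProduct]

theorem mulVec_mem_of_mem_T {S : TSetup X} {U : Submodule ℂ (X → ℂ)}
    (hA : ∀ w ∈ U, S.A *ᵥ w ∈ U) (hAstar : ∀ w ∈ U, S.Astar *ᵥ w ∈ U) {B : Matrix X X ℂ}
    (hB : B ∈ S.T) {w : X → ℂ} (hw : w ∈ U) : B *ᵥ w ∈ U := by
  induction hB using Algebra.adjoin_induction generalizing w with
  | mem C hC =>
    rcases hC with rfl | rfl
    · exact hA w hw
    · exact hAstar w hw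
  | algebraMap c =>
    rw [Algebra.algebraMap_eq_smul_one, Matrix.smul_mulVec, Matrix.one_mulVec]
    exact U.smul_mem c hw
  | add C C' _ _ ih ih' =>
    rw [Matrix.add_mulVec]
    exact U.add_mem (ih hw) (ih' hw)
  | mul C C' _ _ ih ih' =>
    rw [← Matrix.mulVec_mulVec]
    exact ih (ih' hw)

theorem isSpectralDecomp_subtype : IsSpectralDecomp S.D (⟨S.A, S.A_mem_T⟩ : S.T)
    (fun i => ⟨S.E i, S.E_mem_T i⟩) fun i => (S.θ i : ℂ) :=
  .of_map_injective (f := S.T.val) Subtype.val_injective S.isSpectralDecomp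

theorem isSpectralDecomp_star_subtype : IsSpectralDecomp S.D (⟨S.Astar, S.Astar_mem_T⟩ : S.T)
    (fun i => ⟨S.Estar i, S.Estar_mem_T i⟩) fun i => (S.θstar i : ℂ) :=
  .of_map_injective (f := S.T.val) Subtype.val_injective S.isSpectralDecomp_star

end TSetup

namespace TMod

variable {S : TSetup X} (M : TMod S)

/-- The representation of the Terwilliger algebra on `W`. -/
def rep : S.T →ₐ[ℂ] Module.End ℂ M.W where
  toFun B := (B : Matrix X X ℂ).mulVecLin.restrict (M.hWinv B B.2)
  map_one' := LinearMap.ext fun w => Subtype.ext (Matrix.one_mulVec _)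
  map_mul' B C := LinearMap.ext fun w => Subtype.ext (Matrix.mulVec_mulVec _ _ _).symm
  map_zero' := LinearMap.ext fun w => Subtype.ext (Matrix.zero_mulVec _)
  map_add' B C := LinearMap.ext fun w => Subtype.ext (Matrix.add_mulVec _ _ _)
  commutes' c := LinearMap.ext fun w => Subtype.ext <| by
    simp [Algebra.algebraMap_eq_smul_one]

theorem rep_apply (B : S.T) (w : M.W) : (M.rep B w : X → ℂ) = (B : Matrix X X ℂ) *ᵥ w := rfl

theorem actW_eq_rep (B : S.T) : actW S M B = M.rep B :=
  dif_pos (M.hWinv B B.2)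

theorem map_mulVecLin_eq (B : S.T) :
    M.W.map (B : Matrix X X ℂ).mulVecLin = (LinearMap.range (M.rep B)).map M.W.subtype := by
  have hcomm : M.W.subtype ∘ₗ M.rep B = (B : Matrix X X ℂ).mulVecLin ∘ₗ M.W.subtype := rfl
  rw [← LinearMap.range_comp, hcomm, LinearMap.range_comp, Submodule.range_subtype]

theorem rep_ne_zero_iff (B : S.T) :
    M.rep B ≠ 0 ↔ M.W.map (B : Matrix X X ℂ).mulVecLin ≠ ⊥ := by
  rw [map_mulVecLin_eq, Ne, Ne, (Submodule.map_injective_of_injective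
    M.W.injective_subtype).eq_iff' (Submodule.map_bot _), LinearMap.range_eq_bot]

theorem finrank_range_rep_Estar_le_one (i : ℕ) :
    Module.finrank ℂ (LinearMap.range (M.rep ⟨S.Estar i, S.Estar_mem_T i⟩)) ≤ 1 := by
  rw [← Submodule.finrank_map_subtype_eq, ← map_mulVecLin_eq]
  exact M.hthin i

theorem eq_bot_or_eq_top {U : Submodule ℂ M.W} (hA : U ≤ U.comap (M.rep ⟨S.A, S.A_mem_T⟩))
    (hAstar : U ≤ U.comap (M.rep ⟨S.Astar, S.Astar_mem_T⟩)) : U = ⊥ ∨ U = ⊤ := by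
  have hinj := Submodule.map_injective_of_injective M.W.injective_subtype
  refine (M.hWirr (U.map M.W.subtype) (Submodule.map_subtype_le _ _) fun B hB w =>
    TSetup.mulVec_mem_of_mem_T ?_ ?_ hB).imp
      (fun h => hinj (h.trans (Submodule.map_bot _).symm))
      (fun h => hinj (h.trans (Submodule.map_subtype_top _).symm))
  · rintro _ ⟨u, hu, rfl⟩
    exact ⟨_, hA hu, rfl⟩
  · rintro _ ⟨u, hu, rfl⟩
    exact ⟨_, hAstar hu, rfl⟩

theorem isSpectralDecomp_rep : IsSpectralDecomp M.d (M.rep ⟨S.A, S.A_mem_T⟩)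
    (fun i => M.rep ⟨S.E (M.t + i), S.E_mem_T (M.t + i)⟩) fun i => (S.θ (M.t + i) : ℂ) :=
  S.isSpectralDecomp_subtype.map_shift (R' := Module.End ℂ M.W) M.rep fun i =>
    (M.rep_ne_zero_iff ⟨S.E i, S.E_mem_T i⟩).trans (M.ht i)

theorem isSpectralDecomp_rep_star : IsSpectralDecomp M.d (M.rep ⟨S.Astar, S.Astar_mem_T⟩)
    (fun i => M.rep ⟨S.Estar (M.r + i), S.Estar_mem_T (M.r + i)⟩)
    fun i => (S.θstar (M.r + i) : ℂ) :=
  S.isSpectralDecomp_star_subtype.map_shift (R' := Module.End ℂ M.W) M.rep fun i =>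
    (M.rep_ne_zero_iff ⟨S.Estar i, S.Estar_mem_T i⟩).trans (M.hr i)

/-- The Leonard system by which the Terwilliger algebra acts on `W`; its `i`-th idempotents are
the restrictions of `E_{t+i}` and `E*_{r+i}`. -/
def leonardSystem : LeonardSystem ℂ M.W M.d where
  A := M.rep ⟨S.A, S.A_mem_T⟩
  Astar := M.rep ⟨S.Astar, S.Astar_mem_T⟩
  E i := M.rep ⟨S.E (M.t + i), S.E_mem_T (M.t + i)⟩
  Estar i := M.rep ⟨S.Estar (M.r + i), S.Estar_mem_T (M.r + i)⟩
  θ i := S.θ (M.t + i)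
  θstar i := S.θstar (M.r + i)
  spec := M.isSpectralDecomp_rep
  specStar := M.isSpectralDecomp_rep_star
  E_mul_Astar_mul_E i j hij := by
    simp only [← map_mul, MulMemClass.mk_mul_mk,
      S.E_mul_Astar_mul_E (M.t + i) (M.t + j) (by omega)]
    exact map_zero M.rep
  Estar_mul_A_mul_Estar i j hij := by
    simp only [← map_mul, MulMemClass.mk_mul_mk,
      S.Estar_mul_A_mul_Estar (M.r + i) (M.r + j) (by omega)]
    exact map_zero M.rep
  E_ne_zero i hi := (M.rep_ne_zero_iff _).mpr ((M.ht _).mpr ⟨by omega, by omega⟩)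
  Estar_ne_zero i hi := (M.rep_ne_zero_iff _).mpr ((M.hr _).mpr ⟨by omega, by omega⟩)
  finrank_range_Estar_le_one i := M.finrank_range_rep_Estar_le_one (M.r + i)
  irreducible _ hA hAstar := M.eq_bot_or_eq_top hA hAstar

theorem trW_eq_trace_rep (B : S.T) : trW S M B = LinearMap.trace ℂ M.W (M.rep B) := by
  rw [trW, actW_eq_rep]

theorem aW_eq (i : ℕ) : aW S M i = M.leonardSystem.a i := by
  rw [LeonardSystem.a, leonardSystem, ← map_mul, ← trW_eq_trace_rep]
  rfl

theorem xW_eq (i : ℕ) : xW S M i = M.leonardSystem.x i := by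
  rcases i with _ | i
  · rfl
  · rw [LeonardSystem.x, leonardSystem, ← map_mul, ← map_mul, ← map_mul, ← trW_eq_trace_rep]
    rfl

theorem astarW_eq (i : ℕ) : astarW S M i = M.leonardSystem.dual.a i := by
  rw [LeonardSystem.a, LeonardSystem.dual, leonardSystem, ← map_mul, ← trW_eq_trace_rep]
  rfl

theorem xstarW_eq (i : ℕ) : xstarW S M i = M.leonardSystem.dual.x i := by
  rcases i with _ | i
  · rfl
  · rw [LeonardSystem.x, LeonardSystem.dual, leonardSystem, ← map_mul, ← map_mul, ← map_mul,
      ← trW_eq_trace_rep]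
    rfl

theorem pW_eq : ∀ i, pW S M i = M.leonardSystem.p i
  | 0 => rfl
  | 1 => by rw [pW, aW_eq]; rfl
  | n + 2 => by rw [pW, aW_eq, xW_eq, pW_eq n, pW_eq (n + 1)]; rfl

theorem pstarW_eq : ∀ i, pstarW S M i = M.leonardSystem.dual.p i
  | 0 => rfl
  | 1 => by rw [pstarW, astarW_eq]; rfl
  | n + 2 => by rw [pstarW, astarW_eq, xstarW_eq, pstarW_eq n, pstarW_eq (n + 1)]; rfl

theorem aeval_leonardSystem_A (g : ℂ[X]) (w : M.W) :
    (aeval M.leonardSystem.A g w : X → ℂ) = aeval S.A g *ᵥ w := by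
  have hcoe : aeval S.A g = aeval (⟨S.A, S.A_mem_T⟩ : S.T) g :=
    aeval_algHom_apply S.T.val (⟨S.A, S.A_mem_T⟩ : S.T) g
  rw [leonardSystem, aeval_algHom_apply, rep_apply, hcoe]

theorem isFirstSplitSequence {φ : ℕ → ℂ} (hφ : ∀ h < M.d, φ (h + 1) ≠ 0 ∧
    ∀ w ∈ (M.W.map (S.Estar M.r).mulVecLin).map
        (aeval S.A (tau M.leonardSystem.θ (h + 1))).mulVecLin,
      ((S.A - (S.θ (M.t + h) : ℂ) • 1) * (S.Astar - (S.θstar (M.r + (h + 1)) : ℂ) • 1)) *ᵥ w =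
        φ (h + 1) • w) : M.leonardSystem.IsFirstSplitSequence φ := by
  refine fun h hh => ⟨(hφ h hh).1, LinearMap.ext fun w => Subtype.ext ?_⟩
  have hw := (hφ h hh).2 _ (Submodule.mem_map_of_mem (Submodule.mem_map_of_mem w.2))
  set u : M.W := aeval M.leonardSystem.A (tau M.leonardSystem.θ (h + 1))
    (M.leonardSystem.Estar 0 w)
  have hcoe : (u : X → ℂ) = aeval S.A (tau M.leonardSystem.θ (h + 1)) *ᵥ S.Estar M.r *ᵥ w :=
    M.aeval_leonardSystem_A _ _
  simp only [Matrix.mulVecLin_apply, ← hcoe, ← Matrix.mulVec_mulVec, Matrix.sub_mulVec,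
    Matrix.smul_mulVec, Matrix.one_mulVec] at hw
  exact hw

end TMod

end TerwilligerAlgebra

/-- `u_i = Σ_{h=0}^i (τ*_h(θ*_{r+i})/(φ_1 ⋯ φ_h)) τ_h` and dually
`u*_i = Σ_{h=0}^i (τ_h(θ_{t+i})/(φ_1 ⋯ φ_h)) τ*_h`, where `φ_i` is the (nonzero)
eigenvalue of `(A - θ_{t+i-1} I)(A* - θ*_{r+i} I)` on `U_i = τ_i(A) E*_r W`. -/
theorem stmt19 (S : TSetup X) (M : TMod S) (hd : 0 < M.d) (φ : ℕ → ℂ)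
    (hφ : ∀ i : ℕ, 1 ≤ i → i ≤ M.d → φ i ≠ 0 ∧
      ∀ w ∈ (M.W.map (S.Estar M.r).mulVecLin).map
          (Polynomial.aeval S.A
            (∏ h ∈ Finset.range i,
              (Polynomial.X - Polynomial.C ((S.θ (M.t + h) : ℂ))))).mulVecLin,
        ((S.A - ((S.θ (M.t + i - 1) : ℂ)) • 1) *
          (S.Astar - ((S.θstar (M.r + i) : ℂ)) • 1)) *ᵥ w = φ i • w) :
    ∀ i ≤ M.d,
      ((pW S M i).eval ((S.θ M.t : ℂ)))⁻¹ • pW S M i =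
        ∑ h ∈ Finset.range (i + 1),
          ((∏ l ∈ Finset.range h, ((S.θstar (M.r + i) : ℂ) - (S.θstar (M.r + l) : ℂ)))
              / ∏ l ∈ Finset.Icc 1 h, φ l) •
            ∏ l ∈ Finset.range h,
              (Polynomial.X - Polynomial.C ((S.θ (M.t + l) : ℂ))) ∧
      ((pstarW S M i).eval ((S.θstar M.r : ℂ)))⁻¹ • pstarW S M i =
        ∑ h ∈ Finset.range (i + 1),
          ((∏ l ∈ Finset.range h, ((S.θ (M.t + i) : ℂ) - (S.θ (M.t + l) : ℂ)))
              / ∏ l ∈ Finset.Icc 1 h, φ l) •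
            ∏ l ∈ Finset.range h,
              (Polynomial.X - Polynomial.C ((S.θstar (M.r + l) : ℂ))) := by
  intro i hi
  have hφ' : M.leonardSystem.IsFirstSplitSequence φ :=
    M.isFirstSplitSequence fun h hh => hφ (h + 1) h.succ_pos hh
  have hu := hφ'.inv_eval_smul_p hi
  have hustar := hφ'.inv_eval_smul_dual_p hi
  rw [splitSum_eq_sum, ← M.pW_eq] at hu
  rw [splitSum_eq_sum, ← M.pstarW_eq] at hustar
  exact ⟨hu, hustar⟩
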